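/- arXiv:2006.14720 — 3 statements merged into one kernel-verified Lean document; each statement's English description precedes it below -/
import Mathlib

section
/- Let Ω ⊂ ℝ^d be an open bounded set, γ > 0, η > 0, and let u, v, φ : ℝ^d → ℝ be C¹ functions which are bounded with bounded gradients. Assume φ ≤ 0 and v + φ ≥ 0 on Ω, and assume the minimality condition: for every ζ ∈ [0,1], 𝓔(u,v) + 𝓗(v) ≤ 𝓔(u, v+ζφ) + 𝓗(v+ζφ). Then ∫_Ω vφ|∇u|² dx + ∫_Ω (−1/(2γ))(1−v)φ + 2γ ∇v·∇φ dx ≥ 0. -/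
open MeasureTheory RealInnerProductSpace

/-- The elastic part of the regularized fracture energy:
`𝓔(u,v) = (1/2)∫_Ω (v² + η)|∇u|² dx`. -/
noncomputable def fractureE {d : ℕ} (Ω : Set (EuclideanSpace ℝ (Fin d))) (η : ℝ)
    (u v : EuclideanSpace ℝ (Fin d) → ℝ) : ℝ :=
  (1/2) * ∫ x in Ω, ((v x)^2 + η) * ‖gradient u x‖^2

/-- The surface part of the regularized fracture energy:
`𝓗(v) = ∫_Ω (1/(4γ))(1−v)² + γ|∇v|² dx`. -/
noncomputable def fractureH {d : ℕ} (Ω : Set (EuclideanSpace ℝ (Fin d))) (γ : ℝ)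
    (v : EuclideanSpace ℝ (Fin d) → ℝ) : ℝ :=
  ∫ x in Ω, (1/(4*γ)) * (1 - v x)^2 + γ * ‖gradient v x‖^2

/-!
Along the ray `ζ ↦ v + ζφ` the total energy is a sum of squared `L²` norms of affine functions of
`ζ`, namely of `(v + ζφ)∇u`, `1 - (v + ζφ)` and `∇v + ζ∇φ`. It is therefore differentiable at
`ζ = 0`, and its derivative there, computed by polarization, is the first variation of the energy.
Minimality along the ray makes this one-sided derivative nonnegative.
-/

open Filter Topology

theorem nonneg_of_hasDerivWithinAt_Ioi_of_eventually_le {f : ℝ → ℝ} {f' a : ℝ}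
    (hf : HasDerivWithinAt f f' (Set.Ioi a) a) (hmin : ∀ᶠ t in 𝓝[>] a, f a ≤ f t) : 0 ≤ f' := by
  have hone : (1 : ℝ) ∈ posTangentConeAt (Set.Ioi a) a :=
    one_mem_posTangentConeAt_iff_mem_closure.2 (by simp)
  have hlocal : IsLocalMinOn f (Set.Ioi a) a := hmin
  simpa using hlocal.hasFDerivWithinAt_nonneg hf.hasFDerivWithinAt hone

section SquareIntegrable

variable {α F : Type*} [MeasurableSpace α] {μ : Measure α} [NormedAddCommGroup F] {f g : α → F}

theorem integrable_norm_add_smul_sq_of_memLp_two [NormedSpace ℝ F] (hf : MemLp f 2 μ)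
    (hg : MemLp g 2 μ) (t : ℝ) : Integrable (fun x => ‖f x + t • g x‖ ^ 2) μ :=
  (hf.add (hg.const_smul t)).integrable_norm_pow two_ne_zero

variable [InnerProductSpace ℝ F]

theorem integrable_inner_of_memLp_two (hf : MemLp f 2 μ) (hg : MemLp g 2 μ) :
    Integrable (fun x => ⟪f x, g x⟫) μ :=
  (L2.integrable_inner (𝕜 := ℝ) (hf.toLp f) (hg.toLp g)).congr <| by
    filter_upwards [hf.coeFn_toLp, hg.coeFn_toLp] with x hfx hgx
    rw [hfx, hgx]

theorem inner_toLp_eq_integral (hf : MemLp f 2 μ) (hg : MemLp g 2 μ) :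
    ⟪hf.toLp f, hg.toLp g⟫ = ∫ x, ⟪f x, g x⟫ ∂μ := by
  rw [L2.inner_def]
  refine integral_congr_ae ?_
  filter_upwards [hf.coeFn_toLp, hg.coeFn_toLp] with x hfx hgx
  rw [hfx, hgx]

theorem hasDerivAt_integral_norm_add_smul_sq (hf : MemLp f 2 μ) (hg : MemLp g 2 μ) :
    HasDerivAt (fun t : ℝ => ∫ x, ‖f x + t • g x‖ ^ 2 ∂μ) (2 * ∫ x, ⟪f x, g x⟫ ∂μ) 0 := by
  have h_norm (t : ℝ) :
      ∫ x, ‖f x + t • g x‖ ^ 2 ∂μ = ‖hf.toLp f + t • hg.toLp g‖ ^ 2 := by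
    have hfg := hf.add (hg.const_smul t)
    rw [← MemLp.toLp_const_smul, ← MemLp.toLp_add, ← real_inner_self_eq_norm_sq,
      inner_toLp_eq_integral hfg hfg]
    simp only [real_inner_self_eq_norm_sq, Pi.add_apply, Pi.smul_apply]
  have h_line : HasDerivAt (fun t : ℝ => hf.toLp f + t • hg.toLp g) (hg.toLp g) 0 := by
    simpa using ((hasDerivAt_id (0 : ℝ)).smul_const (hg.toLp g)).const_add (hf.toLp f)
  simpa [h_norm, inner_toLp_eq_integral hf hg] using h_line.norm_sq

end SquareIntegrable

theorem memLp_restrict_of_continuous_of_isBounded {X F : Type*} [PseudoMetricSpace X]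
    [ProperSpace X] [MeasurableSpace X] [OpensMeasurableSpace X] [NormedAddCommGroup F]
    [SecondCountableTopologyEither X F] {μ : Measure X} [IsFiniteMeasureOnCompacts μ] {s : Set X}
    {f : X → F} (hf : Continuous f) (hs : Bornology.IsBounded s) (p : ENNReal) :
    MemLp f p (μ.restrict s) := by
  obtain ⟨C, hC⟩ := hs.isCompact_closure.exists_bound_of_continuousOn hf.continuousOn
  have : IsFiniteMeasure (μ.restrict (closure s)) :=
    isFiniteMeasure_restrict.2 hs.isCompact_closure.measure_ne_top
  have h_closure : MemLp f p (μ.restrict (closure s)) :=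
    .of_bound hf.aestronglyMeasurable C <|
      ae_restrict_of_forall_mem isClosed_closure.measurableSet hC
  exact h_closure.mono_measure (Measure.restrict_mono subset_closure le_rfl)

section Gradient

variable {E : Type*} [NormedAddCommGroup E] [InnerProductSpace ℝ E] [CompleteSpace E]

theorem continuous_gradient_of_contDiff {f : E → ℝ} (hf : ContDiff ℝ 1 f) :
    Continuous (gradient f) :=
  (InnerProductSpace.toDual ℝ E).symm.continuous.comp (hf.continuous_fderiv one_ne_zero)

theorem gradient_add_const_mul {f g : E → ℝ} {x : E} (hf : DifferentiableAt ℝ f x)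
    (hg : DifferentiableAt ℝ g x) (c : ℝ) :
    gradient (fun y => f y + c * g y) x = gradient f x + c • gradient g x := by
  have h : fderiv ℝ (fun y => f y + c * g y) x = fderiv ℝ f x + c • fderiv ℝ g x :=
    (hf.hasFDerivAt.add (hg.hasFDerivAt.const_mul c)).fderiv
  simp only [gradient, h, map_add, map_smul]

end Gradient

section FractureEnergy

variable {d : ℕ} {Ω : Set (EuclideanSpace ℝ (Fin d))} {u v z φ : EuclideanSpace ℝ (Fin d) → ℝ}

theorem hasDerivAt_fractureE_add_mul (η : ℝ) (hu : MemLp (gradient u) 2 (volume.restrict Ω))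
    (hv : MemLp (fun x => v x • gradient u x) 2 (volume.restrict Ω))
    (hφ : MemLp (fun x => φ x • gradient u x) 2 (volume.restrict Ω)) :
    HasDerivAt (fun ζ => fractureE Ω η u (fun x => v x + ζ * φ x))
      (∫ x in Ω, v x * φ x * ‖gradient u x‖ ^ 2) 0 := by
  have h_energy (ζ : ℝ) : fractureE Ω η u (fun x => v x + ζ * φ x) =
      1 / 2 * ((∫ x in Ω, ‖v x • gradient u x + ζ • φ x • gradient u x‖ ^ 2)
        + η * ∫ x in Ω, ‖gradient u x‖ ^ 2) := by
    rw [fractureE, ← integral_const_mul η, ← integral_add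
      (integrable_norm_add_smul_sq_of_memLp_two hv hφ ζ)
      ((hu.integrable_norm_pow two_ne_zero).const_mul η)]
    congr! 3 with x
    rw [smul_smul, ← add_smul, norm_smul, mul_pow, Real.norm_eq_abs, sq_abs]
    ring
  have h_inner : ∫ x in Ω, v x * φ x * ‖gradient u x‖ ^ 2 =
      1 / 2 * (2 * ∫ x in Ω, ⟪v x • gradient u x, φ x • gradient u x⟫) := by
    rw [← mul_assoc, one_div_mul_cancel two_ne_zero, one_mul]
    congr! 2 with x
    rw [real_inner_smul_left, real_inner_smul_right, real_inner_self_eq_norm_sq, mul_assoc]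
  simp only [h_energy, h_inner]
  exact ((hasDerivAt_integral_norm_add_smul_sq hv hφ).add_const _).const_mul _

theorem hasDerivAt_fractureH_add_mul (γ : ℝ)
    (hv_diff : ∀ᵐ x ∂volume.restrict Ω, DifferentiableAt ℝ v x)
    (hφ_diff : ∀ᵐ x ∂volume.restrict Ω, DifferentiableAt ℝ φ x)
    (hv : MemLp (fun x => 1 - v x) 2 (volume.restrict Ω)) (hφ : MemLp φ 2 (volume.restrict Ω))
    (hv_grad : MemLp (gradient v) 2 (volume.restrict Ω))
    (hφ_grad : MemLp (gradient φ) 2 (volume.restrict Ω)) :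
    HasDerivAt (fun ζ => fractureH Ω γ (fun x => v x + ζ * φ x))
      (∫ x in Ω, (-1 / (2 * γ)) * (1 - v x) * φ x + 2 * γ * ⟪gradient v x, gradient φ x⟫) 0 := by
  have h_energy (ζ : ℝ) : fractureH Ω γ (fun x => v x + ζ * φ x) =
      1 / (4 * γ) * (∫ x in Ω, ‖(1 - v x) + ζ • (-φ) x‖ ^ 2)
        + γ * ∫ x in Ω, ‖gradient v x + ζ • gradient φ x‖ ^ 2 := by
    rw [fractureH, ← integral_const_mul, ← integral_const_mul, ← integral_add
      ((integrable_norm_add_smul_sq_of_memLp_two hv hφ.neg ζ).const_mul _)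
      ((integrable_norm_add_smul_sq_of_memLp_two hv_grad hφ_grad ζ).const_mul _)]
    refine integral_congr_ae ?_
    filter_upwards [hv_diff, hφ_diff] with x hvx hφx
    rw [gradient_add_const_mul hvx hφx, Real.norm_eq_abs, sq_abs, Pi.neg_apply, smul_eq_mul]
    ring
  have h_inner :
      ∫ x in Ω, (-1 / (2 * γ)) * (1 - v x) * φ x + 2 * γ * ⟪gradient v x, gradient φ x⟫ =
        1 / (4 * γ) * (2 * ∫ x in Ω, ⟪1 - v x, (-φ) x⟫)
          + γ * (2 * ∫ x in Ω, ⟪gradient v x, gradient φ x⟫) := by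
    simp only [← integral_const_mul]
    rw [← integral_add (((integrable_inner_of_memLp_two hv hφ.neg).const_mul _).const_mul _)
      (((integrable_inner_of_memLp_two hv_grad hφ_grad).const_mul _).const_mul _)]
    congr! 2 with x
    rw [Real.inner_apply, Pi.neg_apply]
    ring
  simp only [h_energy, h_inner]
  exact ((hasDerivAt_integral_norm_add_smul_sq hv hφ.neg).const_mul _).add
    ((hasDerivAt_integral_norm_add_smul_sq hv_grad hφ_grad).const_mul _)

/-- The pairs `(u, z)` for which the integrands of `fractureE Ω η u z` and `fractureH Ω γ z` are
integrable whatever `η` and `γ`, expressed as square integrability of the underlying fields.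
Differentiability almost everywhere is part of the definition because `gradient` takes the junk
value `0` where it fails. -/
structure HasFiniteFractureEnergy (Ω : Set (EuclideanSpace ℝ (Fin d)))
    (u z : EuclideanSpace ℝ (Fin d) → ℝ) : Prop where
  ae_differentiableAt_left : ∀ᵐ x ∂volume.restrict Ω, DifferentiableAt ℝ u x
  ae_differentiableAt_right : ∀ᵐ x ∂volume.restrict Ω, DifferentiableAt ℝ z x
  memLp_gradient_left : MemLp (gradient u) 2 (volume.restrict Ω)
  memLp_smul_gradient : MemLp (fun x => z x • gradient u x) 2 (volume.restrict Ω)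
  memLp_one_sub : MemLp (fun x => 1 - z x) 2 (volume.restrict Ω)
  memLp_gradient_right : MemLp (gradient z) 2 (volume.restrict Ω)

namespace HasFiniteFractureEnergy

theorem of_contDiff (hΩ : Bornology.IsBounded Ω) (hu : ContDiff ℝ 1 u) (hz : ContDiff ℝ 1 z) :
    HasFiniteFractureEnergy Ω u z := by
  have hu_grad := continuous_gradient_of_contDiff hu
  have hz_grad := continuous_gradient_of_contDiff hz
  have hz_cont := hz.continuous
  refine ⟨.of_forall (hu.differentiable one_ne_zero), .of_forall (hz.differentiable one_ne_zero),
    ?_, ?_, ?_, ?_⟩ <;>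
  exact memLp_restrict_of_continuous_of_isBounded (by fun_prop) hΩ 2

theorem hasDerivAt_fractureE (hv : HasFiniteFractureEnergy Ω u v)
    (hvφ : HasFiniteFractureEnergy Ω u (fun x => v x + φ x)) (η : ℝ) :
    HasDerivAt (fun ζ => fractureE Ω η u (fun x => v x + ζ * φ x))
      (∫ x in Ω, v x * φ x * ‖gradient u x‖ ^ 2) 0 := by
  have hφ : MemLp (fun x => φ x • gradient u x) 2 (volume.restrict Ω) := by
    refine (hvφ.memLp_smul_gradient.sub hv.memLp_smul_gradient).ae_eq (.of_forall fun x => ?_)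
    rw [Pi.sub_apply, ← sub_smul, add_sub_cancel_left]
  exact hasDerivAt_fractureE_add_mul η hv.memLp_gradient_left hv.memLp_smul_gradient hφ

theorem hasDerivAt_fractureH (hv : HasFiniteFractureEnergy Ω u v)
    (hvφ : HasFiniteFractureEnergy Ω u (fun x => v x + φ x)) (γ : ℝ) :
    HasDerivAt (fun ζ => fractureH Ω γ (fun x => v x + ζ * φ x))
      (∫ x in Ω, (-1 / (2 * γ)) * (1 - v x) * φ x + 2 * γ * ⟪gradient v x, gradient φ x⟫) 0 := by
  have hφ_diff : ∀ᵐ x ∂volume.restrict Ω, DifferentiableAt ℝ φ x := by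
    filter_upwards [hv.ae_differentiableAt_right, hvφ.ae_differentiableAt_right] with x hvx hvφx
    simpa using hvφx.fun_sub hvx
  have hφ : MemLp φ 2 (volume.restrict Ω) := by
    refine (hv.memLp_one_sub.sub hvφ.memLp_one_sub).ae_eq (.of_forall fun x => ?_)
    rw [Pi.sub_apply, sub_sub_sub_cancel_left, add_sub_cancel_left]
  have hφ_grad : MemLp (gradient φ) 2 (volume.restrict Ω) := by
    refine (hvφ.memLp_gradient_right.sub hv.memLp_gradient_right).ae_eq ?_
    filter_upwards [hv.ae_differentiableAt_right, hφ_diff] with x hvx hφx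
    have h_grad := gradient_add_const_mul hvx hφx 1
    simp only [one_mul, one_smul] at h_grad
    rw [Pi.sub_apply, h_grad, add_sub_cancel_left]
  exact hasDerivAt_fractureH_add_mul γ hv.ae_differentiableAt_right hφ_diff hv.memLp_one_sub hφ
    hv.memLp_gradient_right hφ_grad

end HasFiniteFractureEnergy

theorem stmt_1_general {γ η : ℝ} (_hγ : γ ≠ 0) (hv : HasFiniteFractureEnergy Ω u v)
    (hvφ : HasFiniteFractureEnergy Ω u (fun x => v x + φ x))
    (hmin : ∀ᶠ ζ in 𝓝[>] (0 : ℝ),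
      fractureE Ω η u v + fractureH Ω γ v ≤
        fractureE Ω η u (fun x => v x + ζ * φ x) + fractureH Ω γ (fun x => v x + ζ * φ x)) :
    0 ≤ (∫ x in Ω, v x * φ x * ‖gradient u x‖ ^ 2)
      + ∫ x in Ω, (-1 / (2 * γ)) * (1 - v x) * φ x + 2 * γ * ⟪gradient v x, gradient φ x⟫ := by
  have h_deriv := (hv.hasDerivAt_fractureE hvφ η).add (hv.hasDerivAt_fractureH hvφ γ)
  refine nonneg_of_hasDerivWithinAt_Ioi_of_eventually_le h_deriv.hasDerivWithinAt ?_
  simpa using hmin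

end FractureEnergy

theorem stmt_1 {d : ℕ} (Ω : Set (EuclideanSpace ℝ (Fin d)))
    (hΩopen : IsOpen Ω) (hΩbd : Bornology.IsBounded Ω)
    (γ η : ℝ) (hγ : 0 < γ) (hη : 0 < η)
    (u v φ : EuclideanSpace ℝ (Fin d) → ℝ)
    (hu : ContDiff ℝ 1 u) (hv : ContDiff ℝ 1 v) (hφ : ContDiff ℝ 1 φ)
    (Cu Cv Cφ : ℝ)
    (hub : ∀ x, |u x| ≤ Cu) (hugb : ∀ x, ‖gradient u x‖ ≤ Cu)
    (hvb : ∀ x, |v x| ≤ Cv) (hvgb : ∀ x, ‖gradient v x‖ ≤ Cv)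
    (hφb : ∀ x, |φ x| ≤ Cφ) (hφgb : ∀ x, ‖gradient φ x‖ ≤ Cφ)
    (hφneg : ∀ x ∈ Ω, φ x ≤ 0) (hvφpos : ∀ x ∈ Ω, 0 ≤ v x + φ x)
    (hmin : ∀ ζ ∈ Set.Icc (0:ℝ) 1,
      fractureE Ω η u v + fractureH Ω γ v ≤
        fractureE Ω η u (fun x => v x + ζ * φ x)
          + fractureH Ω γ (fun x => v x + ζ * φ x)) :
    0 ≤ (∫ x in Ω, v x * φ x * ‖gradient u x‖^2)
        + ∫ x in Ω, (-1/(2*γ)) * (1 - v x) * φ x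
            + 2*γ * ⟪gradient v x, gradient φ x⟫ := by
  exact stmt_1_general hγ.ne' (.of_contDiff hΩbd hu hv) (.of_contDiff hΩbd hu (hv.add hφ))
    (eventually_of_mem (Icc_mem_nhdsGT one_pos) hmin)
end

section
/- Let Y ⊂ ℝ^d be a bounded measurable set of positive Lebesgue measure |Y|, and let z_1, …, z_d : ℝ^d → ℝ be C¹, ℤ^d-periodic functions with bounded gradients such that for each i, ∫_Y (∇z_i(y) − e_i)·∇φ(y) dy = 0 for every ℤ^d-periodic C¹ function φ with bounded gradient. Define the homogenized matrix M_0 by (M_0)_{ij} = δ_{ij} − (1/|Y|) ∫_Y ∂_{y_i} z_j(y) dy. Then M_0 is a symmetric matrix. -/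
open MeasureTheory RealInnerProductSpace

/-- A function `f : ℝ^d → ℝ` is `ℤ^d`-periodic if `f (y + k) = f y` for every
integer translation vector `k ∈ ℤ^d`. -/
def ZdPeriodic {d : ℕ} (f : EuclideanSpace ℝ (Fin d) → ℝ) : Prop :=
  ∀ (y : EuclideanSpace ℝ (Fin d)) (k : Fin d → ℤ),
    f (y + (EuclideanSpace.equiv (Fin d) ℝ).symm (fun i => (k i : ℝ))) = f y

/-!
Testing the `i`-th cell problem against `z_j` says that `∇z_i - e_i` is orthogonal to `∇z_j` in
`L²(Y)`. Hence `⟪∇z_i - e_i, ∇z_j - e_j⟫ = ⟪e_i, e_j⟫ - ⟪e_i, ∇z_j⟫`, which is `|Y|` times the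
`(i, j)` entry of the homogenized matrix. That matrix is therefore, up to the factor `|Y|⁻¹`, the
Gram matrix of the vectors `∇z_i - e_i`.
-/

section Gram

variable {𝕜 E ι : Type*} [RCLike 𝕜] [SeminormedAddCommGroup E] [InnerProductSpace 𝕜 E]

theorem gram_sub_apply_of_inner_sub_left_eq_zero {g e : ι → E}
    (h : ∀ i j, inner 𝕜 (g i - e i) (g j) = 0) (i j : ι) :
    Matrix.gram 𝕜 (g - e) i j = inner 𝕜 (e i) (e j) - inner 𝕜 (e i) (g j) := by
  have h_right : inner 𝕜 (g i) (g j - e j) = 0 := inner_eq_zero_symm.mp (h j i)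
  calc Matrix.gram 𝕜 (g - e) i j = inner 𝕜 (g i - e i) (g j - e j) := rfl
    _ = -inner 𝕜 (e i) (g j - e j) := by rw [inner_sub_left, h_right, zero_sub]
    _ = inner 𝕜 (e i) (e j) - inner 𝕜 (e i) (g j) := by rw [inner_sub_right, neg_sub]

end Gram

theorem inner_toLp_toLp_eq_integral {𝕜 E Ω : Type*} [RCLike 𝕜] [NormedAddCommGroup E]
    [InnerProductSpace 𝕜 E] [MeasurableSpace Ω] {μ : Measure Ω} {f g : Ω → E}
    (hf : MemLp f 2 μ) (hg : MemLp g 2 μ) :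
    inner 𝕜 (hf.toLp f) (hg.toLp g) = ∫ x, inner 𝕜 (f x) (g x) ∂μ := by
  rw [L2.inner_def]
  refine integral_congr_ae ?_
  filter_upwards [hf.coeFn_toLp, hg.coeFn_toLp] with x hfx hgx
  rw [hfx, hgx]

theorem continuous_gradient_of_contDiff_s5 {𝕜 F : Type*} [RCLike 𝕜] [NormedAddCommGroup F]
    [InnerProductSpace 𝕜 F] [CompleteSpace F] {f : F → 𝕜} {n : WithTop ℕ∞}
    (hf : ContDiff 𝕜 n f) (hn : n ≠ 0) : Continuous (gradient f) :=
  (InnerProductSpace.toDual 𝕜 F).symm.continuous.comp (hf.continuous_fderiv hn)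

section Homogenization

variable {Ω ι : Type*} [MeasurableSpace Ω] [Fintype ι] [DecidableEq ι]

/-- The homogenized matrix `I - ⨍ Jᵗ` of a family of vector fields `g`, where row `j` of `J` is
`g j`. In the application `g j` is the gradient of the solution `z j` of the `j`-th cell problem,
and `μ` is Lebesgue measure on the cell. -/
noncomputable def homogenizedMatrix (μ : Measure Ω) (g : ι → Ω → EuclideanSpace ℝ ι) :
    Matrix ι ι ℝ :=
  1 - Matrix.of fun i j => ⨍ x, g j x i ∂μ

variable {μ : Measure Ω} [IsFiniteMeasure μ] [NeZero μ] {g : ι → Ω → EuclideanSpace ℝ ι}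

theorem homogenizedMatrix_eq_smul_gram (hg : ∀ i, MemLp (g i) 2 μ)
    (hcell : ∀ i j, ∫ x, ⟪g i x - EuclideanSpace.single i 1, g j x⟫ ∂μ = 0) :
    homogenizedMatrix μ g = (μ.real Set.univ)⁻¹ • Matrix.gram ℝ
      ((fun i => (hg i).toLp (g i)) -
        fun i => (memLp_const (EuclideanSpace.single i (1 : ℝ))).toLp) := by
  have h_orth (i j : ι) : ⟪(hg i).toLp (g i) -
      (memLp_const (EuclideanSpace.single i (1 : ℝ))).toLp, (hg j).toLp (g j)⟫ = 0 := by
    rw [← MemLp.toLp_sub, inner_toLp_toLp_eq_integral]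
    exact hcell i j
  ext i j
  rw [Matrix.smul_apply, gram_sub_apply_of_inner_sub_left_eq_zero h_orth,
    inner_toLp_toLp_eq_integral, inner_toLp_toLp_eq_integral]
  have h_mass : (μ.real Set.univ)⁻¹ * μ.real Set.univ = 1 :=
    inv_mul_cancel₀ measureReal_univ_ne_zero
  simp [homogenizedMatrix, average_eq, Matrix.one_apply, mul_sub,
    EuclideanSpace.inner_single_left, h_mass]

theorem stmt_5_general (hg : ∀ i, MemLp (g i) 2 μ)
    (hcell : ∀ i j, ∫ x, ⟪g i x - EuclideanSpace.single i 1, g j x⟫ ∂μ = 0) :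
    (homogenizedMatrix μ g).PosSemidef := by
  rw [homogenizedMatrix_eq_smul_gram hg hcell]
  exact (Matrix.posSemidef_gram ℝ _).smul (inv_nonneg.mpr measureReal_nonneg)

end Homogenization

theorem stmt_5 {d : ℕ} (Y : Set (EuclideanSpace ℝ (Fin d)))
    (hYm : MeasurableSet Y) (hYbd : Bornology.IsBounded Y) (hYpos : 0 < volume Y)
    (z : Fin d → EuclideanSpace ℝ (Fin d) → ℝ)
    (hz : ∀ i, ContDiff ℝ 1 (z i)) (hzper : ∀ i, ZdPeriodic (z i))
    (Cz : ℝ) (hzgb : ∀ i y, ‖gradient (z i) y‖ ≤ Cz)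
    (hcell : ∀ (i : Fin d) (φ : EuclideanSpace ℝ (Fin d) → ℝ),
      ContDiff ℝ 1 φ → ZdPeriodic φ → (∃ C, ∀ y, ‖gradient φ y‖ ≤ C) →
      (∫ y in Y, ⟪gradient (z i) y - EuclideanSpace.single i 1, gradient φ y⟫) = 0)
    (M₀ : Matrix (Fin d) (Fin d) ℝ)
    (hM₀ : ∀ i j, M₀ i j =
      (if i = j then (1:ℝ) else 0) - ((volume Y).toReal)⁻¹ * ∫ y in Y, gradient (z j) y i) :
    ∀ i j, M₀ i j = M₀ j i := by
  have : IsFiniteMeasure (volume.restrict Y) := isFiniteMeasure_restrict.mpr hYbd.measure_lt_top.ne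
  have : NeZero (volume Y) := ⟨hYpos.ne'⟩
  have h_memLp (i : Fin d) : MemLp (gradient (z i)) 2 (volume.restrict Y) :=
    .of_bound (continuous_gradient_of_contDiff_s5 (hz i) one_ne_zero).aestronglyMeasurable Cz
      (ae_of_all _ (hzgb i))
  have hM₀_eq : M₀ = homogenizedMatrix (volume.restrict Y) fun i => gradient (z i) := by
    ext i j
    simp [hM₀, homogenizedMatrix, setAverage_eq, Matrix.one_apply, measureReal_def]
  have h_posSemidef : M₀.PosSemidef :=
    hM₀_eq ▸ stmt_5_general h_memLp fun i j => hcell i (z j) (hz j) (hzper j) ⟨Cz, hzgb j⟩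
  exact fun i j => h_posSemidef.isHermitian.apply j i
end

section
/- Let Y ⊂ ℝ^d be a bounded measurable set of positive Lebesgue measure |Y|, and let z_1, …, z_d : ℝ^d → ℝ be C¹, ℤ^d-periodic functions with bounded gradients such that for each i, ∫_Y (∇z_i(y) − e_i)·∇φ(y) dy = 0 for every ℤ^d-periodic C¹ function φ with bounded gradient. Define (M_0)_{ij} = δ_{ij} − (1/|Y|) ∫_Y ∂_{y_i} z_j(y) dy. Then M_0 is positive semidefinite: ξ · M_0 ξ ≥ 0 for every ξ ∈ ℝ^d. -/
open MeasureTheory RealInnerProductSpace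

/-!
In `L²(Y)` with the normalized Lebesgue measure, the constant fields `eᵢ` are orthonormal and the
cell problems, tested against the solutions themselves, say that every `∇zᵢ - eᵢ` is orthogonal to
every `∇zⱼ`. Hence `δᵢⱼ - ⟪eᵢ, ∇zⱼ⟫ = ⟪eᵢ - ∇zᵢ, eⱼ - ∇zⱼ⟫`: the homogenized matrix is the Gram
matrix of the fields `eᵢ - ∇zᵢ`.
-/

section Hilbert

variable {ι 𝕜 E : Type*} [RCLike 𝕜] [SeminormedAddCommGroup E] [InnerProductSpace 𝕜 E]

theorem gram_sub_eq_gram_sub_inner {e g : ι → E} (horth : ∀ i j, inner 𝕜 (g i - e i) (g j) = 0) :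
    Matrix.gram 𝕜 (e - g) = Matrix.gram 𝕜 e - Matrix.of fun i j => inner 𝕜 (e i) (g j) := by
  ext i j
  have hleft : inner 𝕜 (e i) (g j) = inner 𝕜 (g i) (g j) := by
    simpa only [inner_sub_left, sub_eq_zero, eq_comm] using horth i j
  have hright : inner 𝕜 (g i) (e j) = inner 𝕜 (g i) (g j) := by
    have := inner_eq_zero_symm.mp (horth j i)
    simpa only [inner_sub_right, sub_eq_zero, eq_comm] using this
  simp [inner_sub_left, inner_sub_right, hleft, hright]

open scoped ComplexOrder in
theorem posSemidef_gram_sub_inner [Finite ι] {e g : ι → E}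
    (horth : ∀ i j, inner 𝕜 (g i - e i) (g j) = 0) :
    (Matrix.gram 𝕜 e - Matrix.of fun i j => inner 𝕜 (e i) (g j)).PosSemidef :=
  gram_sub_eq_gram_sub_inner horth ▸ Matrix.posSemidef_gram 𝕜 (e - g)

end Hilbert

theorem inner_toLp_toLp {α 𝕜 E : Type*} {mα : MeasurableSpace α} {μ : Measure α} [RCLike 𝕜]
    [NormedAddCommGroup E] [InnerProductSpace 𝕜 E] {f g : α → E} (hf : MemLp f 2 μ)
    (hg : MemLp g 2 μ) :
    inner 𝕜 (hf.toLp f) (hg.toLp g) = ∫ x, inner 𝕜 (f x) (g x) ∂μ := by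
  rw [L2.inner_def]
  refine integral_congr_ae ?_
  filter_upwards [hf.coeFn_toLp, hg.coeFn_toLp] with x hfx hgx
  rw [hfx, hgx]

section Gradient

variable {𝕜 F : Type*} [RCLike 𝕜] [NormedAddCommGroup F] [InnerProductSpace 𝕜 F] [CompleteSpace F]
  {f : F → 𝕜}

theorem continuous_gradient_of_contDiff_one (hf : ContDiff 𝕜 1 f) : Continuous (gradient f) :=
  (InnerProductSpace.toDual 𝕜 F).symm.continuous.comp (hf.continuous_fderiv one_ne_zero)

theorem memLp_gradient_of_norm_le [MeasurableSpace F] [OpensMeasurableSpace F]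
    [SecondCountableTopology F] {μ : Measure F} [IsFiniteMeasure μ] (hf : ContDiff 𝕜 1 f) {C : ℝ}
    (hC : ∀ y, ‖gradient f y‖ ≤ C) (p : ENNReal) : MemLp (gradient f) p μ :=
  .of_bound (continuous_gradient_of_contDiff_one hf).aestronglyMeasurable C (.of_forall hC)

end Gradient

theorem integral_cond {α E : Type*} {mα : MeasurableSpace α} [NormedAddCommGroup E]
    [NormedSpace ℝ E] (μ : Measure α) (s : Set α) (f : α → E) :
    ∫ x, f x ∂ProbabilityTheory.cond μ s = (μ.real s)⁻¹ • ∫ x in s, f x ∂μ := by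
  rw [ProbabilityTheory.cond, integral_smul_measure, ENNReal.toReal_inv, measureReal_def]

/-- Here `g i` stands for `∇zᵢ` and `μ` for the normalized Lebesgue measure on `Y`. -/
theorem stmt_7_general {ι α : Type*} [Fintype ι] [DecidableEq ι]
    {mα : MeasurableSpace α} {μ : Measure α} [IsProbabilityMeasure μ]
    {g : ι → α → EuclideanSpace ℝ ι} (hg : ∀ i, MemLp (g i) 2 μ)
    (hcell : ∀ i j, ∫ y, ⟪g i y - EuclideanSpace.single i 1, g j y⟫ ∂μ = 0) :
    (1 - Matrix.of fun i j => ∫ y, g j y i ∂μ).PosSemidef := by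
  have he (i : ι) : MemLp (fun _ : α => EuclideanSpace.single i (1 : ℝ)) 2 μ := memLp_const _
  have horth (i j : ι) : ⟪(hg i).toLp - (he i).toLp, (hg j).toLp⟫ = 0 := by
    rw [← MemLp.toLp_sub, inner_toLp_toLp]
    exact hcell i j
  have hM : 1 - Matrix.of (fun i j => ∫ y, g j y i ∂μ) =
      Matrix.gram ℝ (fun i => (he i).toLp) - Matrix.of fun i j => ⟪(he i).toLp, (hg j).toLp⟫ := by
    ext i j
    simp only [Matrix.sub_apply, Matrix.of_apply, Matrix.gram_apply, inner_toLp_toLp]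
    simp [Matrix.one_apply, EuclideanSpace.inner_single_left]
  rw [hM]
  exact posSemidef_gram_sub_inner horth

theorem stmt_7 {d : ℕ} (Y : Set (EuclideanSpace ℝ (Fin d)))
    (hYm : MeasurableSet Y) (hYbd : Bornology.IsBounded Y) (hYpos : 0 < volume Y)
    (z : Fin d → EuclideanSpace ℝ (Fin d) → ℝ)
    (hz : ∀ i, ContDiff ℝ 1 (z i)) (hzper : ∀ i, ZdPeriodic (z i))
    (Cz : ℝ) (hzgb : ∀ i y, ‖gradient (z i) y‖ ≤ Cz)
    (hcell : ∀ (i : Fin d) (φ : EuclideanSpace ℝ (Fin d) → ℝ),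
      ContDiff ℝ 1 φ → ZdPeriodic φ → (∃ C, ∀ y, ‖gradient φ y‖ ≤ C) →
      (∫ y in Y, ⟪gradient (z i) y - EuclideanSpace.single i 1, gradient φ y⟫) = 0)
    (M₀ : Matrix (Fin d) (Fin d) ℝ)
    (hM₀ : ∀ i j, M₀ i j =
      (if i = j then (1:ℝ) else 0) - ((volume Y).toReal)⁻¹ * ∫ y in Y, gradient (z j) y i) :
    ∀ ξ : Fin d → ℝ, 0 ≤ ∑ i, (∑ j, M₀ i j * ξ j) * ξ i := by
  intro ξ
  have := ProbabilityTheory.cond_isProbabilityMeasure_of_finite hYpos.ne' hYbd.measure_lt_top.ne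
  have hpsd := stmt_7_general (μ := ProbabilityTheory.cond volume Y)
    (fun i => memLp_gradient_of_norm_le (hz i) (hzgb i) 2) fun i j => by
      rw [integral_cond, hcell i (z j) (hz j) (hzper j) ⟨Cz, hzgb j⟩, smul_zero]
  have hM : M₀ = 1 - Matrix.of fun i j =>
      ∫ y, gradient (z j) y i ∂ProbabilityTheory.cond volume Y := by
    ext i j
    simp [hM₀, integral_cond, Matrix.one_apply, measureReal_def]
  rw [← hM] at hpsd
  simpa [dotProduct, Matrix.mulVec, mul_comm] using hpsd.dotProduct_mulVec_nonneg ξ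
end
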